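/- Assume the late-expensive-obstacles assumption fails (i.e., there exists m ∈ {1,…,ℓ−1} with (Σ_{i=1}^m b_i)/(Σ_{i=1}^m a_i) ≥ (Σ_{i=m+1}^ℓ b_i)/(Σ_{i=m+1}^ℓ a_i)) and that D̂ is nonempty. Then there exists û ∈ {1,…,ℓ−1} such that every minimizer (c_1,…,c_{ℓ−1}) of Σ_{m=1}^ℓ (x_m^c + y_m^c) over D^c satisfies c_û = 0. -/

import Mathlib

open Finset

noncomputable section

/-- Membership in the domain `D` of the optimization problem. -/
def memD (ℓ : ℕ) (a b x y : ℕ → ℝ) : Prop :=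
  (∀ i ∈ Finset.Icc 1 ℓ, 0 < x i ∧ 0 < y i) ∧
  (∑ i ∈ Finset.Icc 1 ℓ, (x i + y i)) ≤ 1 ∧
  (∀ m ∈ Finset.Icc 1 ℓ,
    0 ≤ ∑ i ∈ Finset.Icc 1 m, (x i - (a i) ^ 2 / (2 * x i) - (b i) ^ 2 / (2 * y i)))

/-- Membership in the domain `D̂`: elements of `D` where the cumulative condition holds with
equality for `m = ℓ`. -/
def memDhat (ℓ : ℕ) (a b x y : ℕ → ℝ) : Prop :=
  memD ℓ a b x y ∧
  (∑ i ∈ Finset.Icc 1 ℓ, (x i - (a i) ^ 2 / (2 * x i) - (b i) ^ 2 / (2 * y i))) = 0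

/-- The convention `c_0 = c_ℓ = 0`. -/
def cbar (ℓ : ℕ) (c : ℕ → ℝ) (m : ℕ) : ℝ := if m = 0 ∨ m = ℓ then 0 else c m

/-- Membership in `D^m(c, c')`. -/
def memDm (a b : ℕ → ℝ) (N : ℝ) (m : ℕ) (c c' x y : ℝ) : Prop :=
  0 < x ∧ 0 < y ∧ x + y ≤ N ∧ c + x - (a m) ^ 2 / (2 * x) - (b m) ^ 2 / (2 * y) = c'

/-- Membership in `D̃(c_1, …, c_{ℓ-1})`. -/
def memDtilde (ℓ : ℕ) (a b : ℕ → ℝ) (N : ℝ) (c x y : ℕ → ℝ) : Prop :=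
  (∑ i ∈ Finset.Icc 1 ℓ, (x i + y i)) ≤ 1 ∧
  ∀ m ∈ Finset.Icc 1 ℓ, memDm a b N m (cbar ℓ c (m - 1)) (cbar ℓ c m) (x m) (y m)

/-- Membership in `D^c`. -/
def memDc (ℓ : ℕ) (a b : ℕ → ℝ) (N : ℝ) (c : ℕ → ℝ) : Prop :=
  (∀ m ∈ Finset.Icc 1 (ℓ - 1), 0 ≤ c m) ∧ ∃ x y, memDtilde ℓ a b N c x y

/-- `(x, y)` minimizes `x + y` over `D^m(c, c')`. -/
def isArgminDm (a b : ℕ → ℝ) (N : ℝ) (m : ℕ) (c c' x y : ℝ) : Prop :=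
  memDm a b N m c c' x y ∧ ∀ x' y' : ℝ, memDm a b N m c c' x' y' → x + y ≤ x' + y'

/-- The projection `D^m_x(c, C)` of `D^m(c, C)` to the first coordinate. -/
def Dmx (a b : ℕ → ℝ) (N : ℝ) (m : ℕ) (c C : ℝ) : Set ℝ :=
  {x : ℝ | ∃ y : ℝ, memDm a b N m c C x y}

/-- The function `f(c̃) = sqrt((1 + c̃)/2 + sqrt(c̃²/4 + c̃))`. -/
def fval (c : ℝ) : ℝ := Real.sqrt ((1 + c) / 2 + Real.sqrt (c ^ 2 / 4 + c))

/-- `c̃ = (Σ b_i)² / (2 (Σ a_i)²)`. -/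
def ctilde (ℓ : ℕ) (a b : ℕ → ℝ) : ℝ :=
  (∑ i ∈ Finset.Icc 1 ℓ, b i) ^ 2 / (2 * (∑ i ∈ Finset.Icc 1 ℓ, a i) ^ 2)

/-- The objective function `F` on `ℝ^{2ℓ}`. -/
def Fobj (ℓ : ℕ) (a b x y : ℕ → ℝ) : ℝ :=
  (1 - ∑ i ∈ Finset.Icc 1 ℓ, (x i + y i)) *
  (1 - ∑ i ∈ Finset.Icc 1 ℓ, (y i + (a i) ^ 2 / (2 * x i) + (b i) ^ 2 / (2 * y i)))

/-- The late-expensive-obstacles assumption. -/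
def LateExpensive (ℓ : ℕ) (a b : ℕ → ℝ) : Prop :=
  ∀ m, 1 ≤ m → m < ℓ →
    (∑ i ∈ Finset.Icc 1 m, b i) / (∑ i ∈ Finset.Icc 1 m, a i) <
      (∑ i ∈ Finset.Icc (m + 1) ℓ, b i) / (∑ i ∈ Finset.Icc (m + 1) ℓ, a i)

/-- The ratio `(Σ_{j=p}^q b_j) / (Σ_{j=p}^q a_j)`. -/
def ratioBA (a b : ℕ → ℝ) (p q : ℕ) : ℝ :=
  (∑ j ∈ Finset.Icc p q, b j) / (∑ j ∈ Finset.Icc p q, a j)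

/-- `u` (on indices `0, …, n+1`) is an admissible division into blocks. -/
def AdmissibleDiv (ℓ : ℕ) (a b : ℕ → ℝ) (n : ℕ) (u : ℕ → ℕ) : Prop :=
  u 0 = 0 ∧ u (n + 1) = ℓ ∧ (∀ i ≤ n, u i < u (i + 1)) ∧
  ∀ i ≤ n, ∀ m, u i < m → m < u (i + 1) →
    ratioBA a b (u i + 1) m < ratioBA a b (m + 1) (u (i + 1))

/-- The canonical admissible division into blocks: the admissible division whose index
set is the intersection of the index sets of all admissible divisions into blocks. -/
def IsCanonicalDiv (ℓ : ℕ) (a b : ℕ → ℝ) (n : ℕ) (u : ℕ → ℕ) : Prop :=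
  AdmissibleDiv ℓ a b n u ∧
  ∀ k, (∃ i ≤ n + 1, u i = k) ↔
    ∀ (n' : ℕ) (u' : ℕ → ℕ), AdmissibleDiv ℓ a b n' u' → ∃ i ≤ n' + 1, u' i = k

/-- The minimal time to cross one block with branching length `A` and obstacle length `B`. -/
def blockTime (A B : ℝ) : ℝ :=
  A * fval (B ^ 2 / (2 * A ^ 2)) +
    B ^ 2 / (2 * A * (fval (B ^ 2 / (2 * A ^ 2)) - 1 / (2 * fval (B ^ 2 / (2 * A ^ 2)))))

/-- The total optimal time `T*` associated with a division into blocks. -/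
def Tstar (a b : ℕ → ℝ) (n : ℕ) (u : ℕ → ℕ) : ℝ :=
  ∑ i ∈ Finset.range (n + 1),
    blockTime (∑ j ∈ Finset.Icc (u i + 1) (u (i + 1)), a j)
      (∑ j ∈ Finset.Icc (u i + 1) (u (i + 1)), b j)

/-- The coefficient appearing in the formula for the optimal `c_m`. -/
def coefC (ℓ : ℕ) (a b : ℕ → ℝ) (m : ℕ) : ℝ :=
  ((∑ i ∈ Finset.Icc 1 m, a i) * (∑ i ∈ Finset.Icc (m + 1) ℓ, b i) -
    (∑ i ∈ Finset.Icc 1 m, b i) * (∑ i ∈ Finset.Icc (m + 1) ℓ, a i)) /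
    (∑ i ∈ Finset.Icc 1 ℓ, b i)

/-!
Write `G α β (x, y) = x - α² / (2x) - β² / (2y)`, so that `c_m` is the sum of
`G a_i b_i (x_i, y_i)` over `i ≤ m` and minimizing over `D^c` amounts to minimizing
`Σ (x_i + y_i)` over `D̂`. Each `G a_i b_i` is strictly concave, and a point of `D` with
`c_ℓ > 0` can be made shorter by decreasing `y_ℓ`; hence the minimizer is unique, and it suffices
to find one vanishing coordinate of one minimizer. If all of `c_1, …, c_{ℓ-1}` were positive, the
minimizer could be moved slightly in any direction, in particular towards the competitor with the
same `Σ x_i` and `Σ y_i` but `x_i ∝ a_i`, `y_i ∝ b_i`, whose `c_ℓ` is at least as large by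
Cauchy–Schwarz. So the minimizer is itself proportional, which makes `c_m` an explicit linear
combination of `Σ_{i ≤ m} a_i` and `Σ_{i ≤ m} b_i`, and `c_m > 0 = c_ℓ` then says that the
late-expensive-obstacles inequality holds at `m`.
-/

section ConvexCombination

variable {ι E : Type*} [AddCommGroup E] [Module ℝ E] {s : Finset ι} {U : Set E}
  {f : ι → E → ℝ} {z w : ι → E} {p q : ℝ}

theorem sum_concaveOn_le (hf : ∀ i ∈ s, ConcaveOn ℝ U (f i)) (hz : ∀ i ∈ s, z i ∈ U)
    (hw : ∀ i ∈ s, w i ∈ U) (hp : 0 ≤ p) (hq : 0 ≤ q) (hpq : p + q = 1) :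
    p * ∑ i ∈ s, f i (z i) + q * ∑ i ∈ s, f i (w i) ≤ ∑ i ∈ s, f i ((p • z + q • w) i) := by
  rw [Finset.mul_sum, Finset.mul_sum, ← Finset.sum_add_distrib]
  exact Finset.sum_le_sum fun i hi => (hf i hi).2 (hz i hi) (hw i hi) hp hq hpq

theorem sum_strictConcaveOn_lt (hf : ∀ i ∈ s, StrictConcaveOn ℝ U (f i)) (hz : ∀ i ∈ s, z i ∈ U)
    (hw : ∀ i ∈ s, w i ∈ U) (hne : ∃ i ∈ s, z i ≠ w i) (hp : 0 < p) (hq : 0 < q)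
    (hpq : p + q = 1) :
    p * ∑ i ∈ s, f i (z i) + q * ∑ i ∈ s, f i (w i) < ∑ i ∈ s, f i ((p • z + q • w) i) := by
  obtain ⟨j, hj, hjne⟩ := hne
  rw [Finset.mul_sum, Finset.mul_sum, ← Finset.sum_add_distrib]
  exact Finset.sum_lt_sum
    (fun i hi => (hf i hi).concaveOn.2 (hz i hi) (hw i hi) hp.le hq.le hpq)
    ⟨j, hj, (hf j hj).2 (hz j hj) (hw j hj) hjne hp hq hpq⟩

theorem exists_convexCombination_pos {g h : ι → ℝ} (hg : ∀ i ∈ s, 0 < g i) :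
    ∃ ε : ℝ, 0 < ε ∧ ε < 1 ∧ ∀ i ∈ s, 0 < (1 - ε) * g i + ε * h i := by
  have eventually_pos : ∀ᶠ ε in nhds (0 : ℝ), ∀ i ∈ s, 0 < (1 - ε) * g i + ε * h i := by
    refine (Filter.eventually_all_finset s).2 fun i hi => ?_
    have cont : Continuous fun ε : ℝ => (1 - ε) * g i + ε * h i := by fun_prop
    exact cont.continuousAt.eventually (lt_mem_nhds (by simpa using hg i hi))
  obtain ⟨ε, ⟨hpos, hlt⟩, hε⟩ :=
    (((eventually_pos.and (eventually_lt_nhds one_pos)).filter_mono nhdsWithin_le_nhds).and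
      (self_mem_nhdsWithin (a := (0 : ℝ)) (s := Set.Ioi 0))).exists
  exact ⟨ε, hε, hlt, hpos⟩

end ConvexCombination

section Gain

variable {α β : ℝ}

/-- The open positive quadrant, in which the pairs `(x_i, y_i)` are constrained to lie. -/
def quadrant : Set (ℝ × ℝ) := Set.Ioi 0 ×ˢ Set.Ioi 0

/-- The increment `c_i - c_{i-1} = x - α² / (2x) - β² / (2y)` contributed by a pair `p = (x, y)`
at an obstacle with parameters `α = a_i` and `β = b_i`. -/
def gain (α β : ℝ) (p : ℝ × ℝ) : ℝ := p.1 - α ^ 2 / (2 * p.1) - β ^ 2 / (2 * p.2)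

theorem strictConvexOn_sq_div_two_mul (hα : α ≠ 0) :
    StrictConvexOn ℝ (Set.Ioi 0) fun x => α ^ 2 / (2 * x) := by
  refine ⟨convex_Ioi 0, fun x hx y hy hxy p q hp hq hpq => ?_⟩
  have inv_lt : (p • x + q • y)⁻¹ < p • x⁻¹ + q • y⁻¹ := by
    simpa only [zpow_neg_one] using
      (strictConvexOn_zpow (m := -1) (by norm_num) (by norm_num)).2 hx hy hxy hp hq hpq
  calc α ^ 2 / (2 * (p • x + q • y)) = α ^ 2 / 2 * (p • x + q • y)⁻¹ := by
        rw [← div_div, div_eq_mul_inv]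
    _ < α ^ 2 / 2 * (p • x⁻¹ + q • y⁻¹) := mul_lt_mul_of_pos_left inv_lt (by positivity)
    _ = p • (α ^ 2 / (2 * x)) + q • (α ^ 2 / (2 * y)) := by
        simp only [smul_eq_mul, div_eq_mul_inv]
        ring

theorem strictConcaveOn_gain (hα : α ≠ 0) (hβ : β ≠ 0) :
    StrictConcaveOn ℝ quadrant (gain α β) := by
  refine ⟨(convex_Ioi 0).prod (convex_Ioi 0), fun z hz w hw hzw p q hp hq hpq => ?_⟩
  have convex_fst := strictConvexOn_sq_div_two_mul hα
  have convex_snd := strictConvexOn_sq_div_two_mul hβ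
  have le_fst := convex_fst.convexOn.2 hz.1 hw.1 hp.le hq.le hpq
  have le_snd := convex_snd.convexOn.2 hz.2 hw.2 hp.le hq.le hpq
  simp only [gain, Prod.fst_add, Prod.snd_add, Prod.smul_fst, Prod.smul_snd,
    smul_eq_mul] at le_fst le_snd ⊢
  by_cases hfst : z.1 = w.1
  · have lt_snd := convex_snd.2 hz.2 hw.2 (fun hsnd => hzw (Prod.ext hfst hsnd)) hp hq hpq
    simp only [smul_eq_mul] at lt_snd
    linarith
  · have lt_fst := convex_fst.2 hz.1 hw.1 hfst hp hq hpq
    simp only [smul_eq_mul] at lt_fst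
    linarith

theorem gain_mul (α β r t : ℝ) :
    gain α β (α * r, β * t) = α * (r - 1 / (2 * r)) - β * (1 / (2 * t)) := by
  simp only [gain]
  field_simp

theorem sum_gain_le_gain_sum {ι : Type*} (s : Finset ι) (a b : ι → ℝ) {z : ι → ℝ × ℝ}
    (hz : ∀ i ∈ s, z i ∈ quadrant) :
    ∑ i ∈ s, gain (a i) (b i) (z i) ≤
      gain (∑ i ∈ s, a i) (∑ i ∈ s, b i) (∑ i ∈ s, (z i).1, ∑ i ∈ s, (z i).2) := by
  have cauchy_fst := Finset.sq_sum_div_le_sum_sq_div s a (g := fun i => 2 * (z i).1)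
    fun i hi => mul_pos two_pos (hz i hi).1
  have cauchy_snd := Finset.sq_sum_div_le_sum_sq_div s b (g := fun i => 2 * (z i).2)
    fun i hi => mul_pos two_pos (hz i hi).2
  rw [← Finset.mul_sum] at cauchy_fst cauchy_snd
  simp only [gain, Finset.sum_sub_distrib]
  linarith

theorem exists_gain_eq_sub (α : ℝ) (hβ : β ≠ 0) {p : ℝ × ℝ} (hp : 0 < p.2) {δ : ℝ} (hδ : 0 < δ) :
    ∃ y, 0 < y ∧ y < p.2 ∧ gain α β (p.1, y) = gain α β p - δ := by
  refine ⟨β ^ 2 / (2 * (β ^ 2 / (2 * p.2) + δ)), by positivity, ?_, ?_⟩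
  · calc β ^ 2 / (2 * (β ^ 2 / (2 * p.2) + δ)) < β ^ 2 / (2 * (β ^ 2 / (2 * p.2))) := by
          gcongr
          linarith
      _ = p.2 := by field_simp
  · have cost_eq : β ^ 2 / (2 * (β ^ 2 / (2 * (β ^ 2 / (2 * p.2) + δ)))) =
        β ^ 2 / (2 * p.2) + δ := by field_simp
    simp only [gain, cost_eq]
    ring

end Gain

section Schedule

variable {ℓ m : ℕ} {a b : ℕ → ℝ} {z w : ℕ → ℝ × ℝ}

/-- The value `c_m` of a schedule `z = ((x_i, y_i))_i`: its cumulative gain at the first `m`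
obstacles. -/
def balance (a b : ℕ → ℝ) (m : ℕ) (z : ℕ → ℝ × ℝ) : ℝ :=
  ∑ i ∈ Finset.Icc 1 m, gain (a i) (b i) (z i)

/-- The objective `Σ_{i ≤ ℓ} (x_i + y_i)` of a schedule. -/
def duration (ℓ : ℕ) (z : ℕ → ℝ × ℝ) : ℝ := ∑ i ∈ Finset.Icc 1 ℓ, ((z i).1 + (z i).2)

/-- The domain `D` as a set of sequences of pairs, which makes it a subset of a vector space. The
entries outside `{1, …, ℓ}` are unconstrained. -/
def feasibleSet (ℓ : ℕ) (a b : ℕ → ℝ) : Set (ℕ → ℝ × ℝ) :=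
  {z | memD ℓ a b (fun i => (z i).1) fun i => (z i).2}

/-- The domain `D̂` as a set of sequences of pairs. -/
def balancedSet (ℓ : ℕ) (a b : ℕ → ℝ) : Set (ℕ → ℝ × ℝ) :=
  {z | memDhat ℓ a b (fun i => (z i).1) fun i => (z i).2}

theorem mem_feasibleSet :
    z ∈ feasibleSet ℓ a b ↔ (∀ i ∈ Finset.Icc 1 ℓ, z i ∈ quadrant) ∧ duration ℓ z ≤ 1 ∧
      ∀ m ∈ Finset.Icc 1 ℓ, 0 ≤ balance a b m z :=
  Iff.rfl

theorem mem_balancedSet :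
    z ∈ balancedSet ℓ a b ↔ z ∈ feasibleSet ℓ a b ∧ balance a b ℓ z = 0 :=
  Iff.rfl

@[simp]
theorem balance_zero (a b : ℕ → ℝ) (z : ℕ → ℝ × ℝ) : balance a b 0 z = 0 := by
  simp [balance]

theorem balance_succ (a b : ℕ → ℝ) (m : ℕ) (z : ℕ → ℝ × ℝ) :
    balance a b (m + 1) z = balance a b m z + gain (a (m + 1)) (b (m + 1)) (z (m + 1)) :=
  Finset.sum_Icc_succ_top (by omega) _

theorem duration_succ (m : ℕ) (z : ℕ → ℝ × ℝ) :
    duration (m + 1) z = duration m z + ((z (m + 1)).1 + (z (m + 1)).2) :=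
  Finset.sum_Icc_succ_top (by omega) _

theorem balance_congr (hzw : Set.EqOn z w (Set.Icc 1 ℓ)) (hm : m ≤ ℓ) :
    balance a b m z = balance a b m w :=
  Finset.sum_congr rfl fun i hi => by
    rw [hzw ⟨(Finset.mem_Icc.1 hi).1, (Finset.mem_Icc.1 hi).2.trans hm⟩]

theorem duration_congr (hzw : Set.EqOn z w (Set.Icc 1 ℓ)) : duration ℓ z = duration ℓ w :=
  Finset.sum_congr rfl fun i hi => by rw [hzw (Finset.mem_Icc.1 hi)]

theorem duration_smul_add_smul (ℓ : ℕ) (p q : ℝ) (z w : ℕ → ℝ × ℝ) :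
    duration ℓ (p • z + q • w) = p * duration ℓ z + q * duration ℓ w := by
  simp only [duration, Finset.mul_sum, ← Finset.sum_add_distrib]
  refine Finset.sum_congr rfl fun i _ => ?_
  simp only [Pi.add_apply, Pi.smul_apply, Prod.fst_add, Prod.snd_add, Prod.smul_fst,
    Prod.smul_snd, smul_eq_mul]
  ring

theorem smul_add_smul_mem_feasibleSet (ha : ∀ i ∈ Finset.Icc 1 ℓ, a i ≠ 0)
    (hb : ∀ i ∈ Finset.Icc 1 ℓ, b i ≠ 0) (hz : ∀ i ∈ Finset.Icc 1 ℓ, z i ∈ quadrant)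
    (hw : ∀ i ∈ Finset.Icc 1 ℓ, w i ∈ quadrant) (hzdur : duration ℓ z ≤ 1)
    (hwdur : duration ℓ w ≤ 1) {p q : ℝ} (hp : 0 ≤ p) (hq : 0 ≤ q) (hpq : p + q = 1)
    (hbal : ∀ m ∈ Finset.Icc 1 ℓ, 0 ≤ p * balance a b m z + q * balance a b m w) :
    p • z + q • w ∈ feasibleSet ℓ a b := by
  refine mem_feasibleSet.2 ⟨fun i hi => ?_, ?_, fun m hm => (hbal m hm).trans ?_⟩
  · exact ((convex_Ioi 0).prod (convex_Ioi 0)) (hz i hi) (hw i hi) hp hq hpq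
  · calc duration ℓ (p • z + q • w) = p * duration ℓ z + q * duration ℓ w :=
          duration_smul_add_smul ℓ p q z w
      _ ≤ p * 1 + q * 1 := by gcongr
      _ = 1 := by linarith
  · have hsub : Finset.Icc 1 m ⊆ Finset.Icc 1 ℓ :=
      Finset.Icc_subset_Icc_right (Finset.mem_Icc.1 hm).2
    exact sum_concaveOn_le
      (fun i hi => (strictConcaveOn_gain (ha i (hsub hi)) (hb i (hsub hi))).concaveOn)
      (fun i hi => hz i (hsub hi)) (fun i hi => hw i (hsub hi)) hp hq hpq

theorem convex_feasibleSet (ha : ∀ i ∈ Finset.Icc 1 ℓ, a i ≠ 0)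
    (hb : ∀ i ∈ Finset.Icc 1 ℓ, b i ≠ 0) : Convex ℝ (feasibleSet ℓ a b) := by
  rintro z ⟨hzpos, hzdur, hzbal⟩ w ⟨hwpos, hwdur, hwbal⟩ p q hp hq hpq
  exact smul_add_smul_mem_feasibleSet ha hb hzpos hwpos hzdur hwdur hp hq hpq fun m hm =>
    add_nonneg (mul_nonneg hp (hzbal m hm)) (mul_nonneg hq (hwbal m hm))

theorem exists_mem_balancedSet_duration_lt (hb : b ℓ ≠ 0) (hz : z ∈ feasibleSet ℓ a b)
    (hpos : 0 < balance a b ℓ z) : ∃ w ∈ balancedSet ℓ a b, duration ℓ w < duration ℓ z := by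
  obtain ⟨hquad, hdur, hbal⟩ := mem_feasibleSet.1 hz
  obtain _ | k := ℓ
  · simp at hpos
  have hlast := hquad (k + 1) (by simp)
  obtain ⟨y, hy, hylt, hgain⟩ := exists_gain_eq_sub (a (k + 1)) hb hlast.2 hpos
  set w := Function.update z (k + 1) ((z (k + 1)).1, y)
  have hw_last : w (k + 1) = ((z (k + 1)).1, y) := Function.update_self ..
  have hw_of_ne : ∀ i ≠ k + 1, w i = z i := fun i hi => Function.update_of_ne hi ..
  have hwz : Set.EqOn w z (Set.Icc 1 k) := fun i hi => hw_of_ne i (by have := hi.2; omega)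
  have hw_balance : balance a b (k + 1) w = 0 := by
    rw [balance_succ, balance_congr hwz le_rfl, hw_last, hgain, balance_succ]
    ring
  have hw_lt : duration (k + 1) w < duration (k + 1) z := by
    rw [duration_succ, duration_succ, duration_congr hwz, hw_last]
    gcongr
  refine ⟨w, mem_balancedSet.2 ⟨mem_feasibleSet.2 ⟨fun i hi => ?_, hw_lt.le.trans hdur,
    fun m hm => ?_⟩, hw_balance⟩, hw_lt⟩
  · obtain rfl | hne := eq_or_ne i (k + 1)
    · exact hw_last ▸ ⟨hlast.1, hy⟩
    · exact hw_of_ne i hne ▸ hquad i hi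
  · obtain rfl | hne := eq_or_ne m (k + 1)
    · exact hw_balance.ge
    · have hm_le := (Finset.mem_Icc.1 hm).2
      have hmk : m ≤ k := by omega
      exact (balance_congr hwz hmk).symm ▸ hbal m hm

theorem eqOn_of_isMinOn_balancedSet (ha : ∀ i ∈ Finset.Icc 1 ℓ, a i ≠ 0)
    (hb : ∀ i ∈ Finset.Icc 1 ℓ, b i ≠ 0) (hmin : IsMinOn (duration ℓ) (balancedSet ℓ a b) z)
    (hz : z ∈ feasibleSet ℓ a b) (hw : w ∈ feasibleSet ℓ a b)
    (hle : duration ℓ w ≤ duration ℓ z) : Set.EqOn z w (Set.Icc 1 ℓ) := by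
  by_contra hne
  simp only [Set.EqOn, not_forall] at hne
  obtain ⟨j, hj, hjne⟩ := hne
  have hhalf : (1 / 2 : ℝ) + 1 / 2 = 1 := by norm_num
  have midpoint_mem : (1 / 2 : ℝ) • z + (1 / 2 : ℝ) • w ∈ feasibleSet ℓ a b :=
    convex_feasibleSet ha hb hz hw (by norm_num) (by norm_num) hhalf
  have midpoint_balance : 0 < balance a b ℓ ((1 / 2 : ℝ) • z + (1 / 2 : ℝ) • w) := by
    have hℓ : ℓ ∈ Finset.Icc 1 ℓ := Finset.mem_Icc.2 ⟨hj.1.trans hj.2, le_rfl⟩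
    have hlt : 1 / 2 * balance a b ℓ z + 1 / 2 * balance a b ℓ w <
        balance a b ℓ ((1 / 2 : ℝ) • z + (1 / 2 : ℝ) • w) :=
      sum_strictConcaveOn_lt (fun i hi => strictConcaveOn_gain (ha i hi) (hb i hi)) hz.1 hw.1
        ⟨j, Finset.mem_Icc.2 hj, hjne⟩ (by norm_num) (by norm_num) hhalf
    linarith [(mem_feasibleSet.1 hz).2.2 ℓ hℓ, (mem_feasibleSet.1 hw).2.2 ℓ hℓ]
  obtain ⟨v, hv, hvlt⟩ := exists_mem_balancedSet_duration_lt
    (hb ℓ (Finset.mem_Icc.2 ⟨hj.1.trans hj.2, le_rfl⟩)) midpoint_mem midpoint_balance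
  rw [duration_smul_add_smul] at hvlt
  linarith [isMinOn_iff.1 hmin v hv]

theorem eqOn_of_isMinOn_balancedSet_of_balance_pos (ha : ∀ i ∈ Finset.Icc 1 ℓ, a i ≠ 0)
    (hb : ∀ i ∈ Finset.Icc 1 ℓ, b i ≠ 0) (hmin : IsMinOn (duration ℓ) (balancedSet ℓ a b) z)
    (hz : z ∈ balancedSet ℓ a b) (hpos : ∀ m ∈ Finset.Ico 1 ℓ, 0 < balance a b m z)
    (hw : ∀ i ∈ Finset.Icc 1 ℓ, w i ∈ quadrant) (hle : duration ℓ w ≤ duration ℓ z)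
    (hbal : 0 ≤ balance a b ℓ w) : Set.EqOn z w (Set.Icc 1 ℓ) := by
  obtain ⟨hzfeas, hzbal⟩ := mem_balancedSet.1 hz
  obtain ⟨hzquad, hzdur, -⟩ := mem_feasibleSet.1 hzfeas
  obtain ⟨ε, hε, hε1, hcomb⟩ :=
    exists_convexCombination_pos (h := fun m => balance a b m w) hpos
  have segment_mem : (1 - ε) • z + ε • w ∈ feasibleSet ℓ a b := by
    refine smul_add_smul_mem_feasibleSet ha hb hzquad hw hzdur (hle.trans hzdur)
      (by linarith) hε.le (by ring) fun m hm => ?_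
    obtain rfl | hne := eq_or_ne m ℓ
    · rw [hzbal]
      positivity
    · obtain ⟨hm1, hmℓ⟩ := Finset.mem_Icc.1 hm
      exact (hcomb m (Finset.mem_Ico.2 ⟨hm1, by omega⟩)).le
  have segment_le : duration ℓ ((1 - ε) • z + ε • w) ≤ duration ℓ z := by
    rw [duration_smul_add_smul]
    nlinarith
  intro i hi
  have hi_eq : z i = (1 - ε) • z i + ε • w i :=
    eqOn_of_isMinOn_balancedSet ha hb hmin hzfeas segment_mem segment_le hi
  refine smul_right_injective _ hε.ne' ?_
  calc ε • z i = z i - (1 - ε) • z i := by module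
    _ = ε • w i := sub_eq_of_eq_add' hi_eq

/-- The schedule with `x_i = r a_i` and `y_i = t b_i`. -/
def proportional (a b : ℕ → ℝ) (r t : ℝ) : ℕ → ℝ × ℝ := fun i => (a i * r, b i * t)

theorem balance_proportional (a b : ℕ → ℝ) (m : ℕ) (r t : ℝ) :
    balance a b m (proportional a b r t) =
      (∑ i ∈ Finset.Icc 1 m, a i) * (r - 1 / (2 * r)) -
        (∑ i ∈ Finset.Icc 1 m, b i) * (1 / (2 * t)) := by
  simp only [balance, proportional, gain_mul, Finset.sum_sub_distrib, Finset.sum_mul]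

theorem exists_proportional_balance_le (hℓ : 1 ≤ ℓ) (ha : ∀ i ∈ Finset.Icc 1 ℓ, 0 < a i)
    (hb : ∀ i ∈ Finset.Icc 1 ℓ, 0 < b i) (hz : ∀ i ∈ Finset.Icc 1 ℓ, z i ∈ quadrant) :
    ∃ r t : ℝ, 0 < r ∧ 0 < t ∧ duration ℓ (proportional a b r t) = duration ℓ z ∧
      balance a b ℓ z ≤ balance a b ℓ (proportional a b r t) := by
  have hne : (Finset.Icc 1 ℓ).Nonempty := Finset.nonempty_Icc.2 hℓ
  have hA := Finset.sum_pos ha hne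
  have hB := Finset.sum_pos hb hne
  have hX : 0 < ∑ i ∈ Finset.Icc 1 ℓ, (z i).1 := Finset.sum_pos (fun i hi => (hz i hi).1) hne
  have hY : 0 < ∑ i ∈ Finset.Icc 1 ℓ, (z i).2 := Finset.sum_pos (fun i hi => (hz i hi).2) hne
  have hr := mul_div_cancel₀ (∑ i ∈ Finset.Icc 1 ℓ, (z i).1) hA.ne'
  have ht := mul_div_cancel₀ (∑ i ∈ Finset.Icc 1 ℓ, (z i).2) hB.ne'
  refine ⟨_, _, div_pos hX hA, div_pos hY hB, ?_, ?_⟩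
  · simp only [duration, proportional, Finset.sum_add_distrib, ← Finset.sum_mul, hr, ht]
  · rw [balance_proportional, ← gain_mul, hr, ht]
    exact sum_gain_le_gain_sum _ a b hz

theorem div_lt_div_of_pos_of_add_eq_zero {A₁ A₂ B₁ B₂ p q : ℝ} (hA₁ : 0 < A₁) (hA₂ : 0 < A₂)
    (hq : 0 < q) (hpos : 0 < A₁ * p - B₁ * q) (hzero : (A₁ + A₂) * p - (B₁ + B₂) * q = 0) :
    B₁ / A₁ < B₂ / A₂ :=
  calc B₁ / A₁ < p / q := by rw [div_lt_div_iff₀ hA₁ hq]; linarith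
    _ < B₂ / A₂ := by rw [div_lt_div_iff₀ hq hA₂]; linarith

theorem sum_Icc_add_sum_Icc_succ {M : Type*} [AddCommMonoid M] (f : ℕ → M) (hm : m ≤ ℓ) :
    ∑ i ∈ Finset.Icc 1 m, f i + ∑ i ∈ Finset.Icc (m + 1) ℓ, f i = ∑ i ∈ Finset.Icc 1 ℓ, f i := by
  simpa only [← Finset.Icc_add_one_left_eq_Ioc, zero_add] using
    Finset.sum_Ioc_consecutive f m.zero_le hm

theorem lateExpensive_of_isMinOn_balancedSet (ha : ∀ i ∈ Finset.Icc 1 ℓ, 0 < a i)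
    (hb : ∀ i ∈ Finset.Icc 1 ℓ, 0 < b i) (hmin : IsMinOn (duration ℓ) (balancedSet ℓ a b) z)
    (hz : z ∈ balancedSet ℓ a b) (hpos : ∀ m ∈ Finset.Ico 1 ℓ, 0 < balance a b m z) :
    LateExpensive ℓ a b := by
  intro m hm1 hmℓ
  obtain ⟨hzfeas, hzbal⟩ := mem_balancedSet.1 hz
  obtain ⟨r, t, hr, ht, hdur, hbal⟩ :=
    exists_proportional_balance_le (hm1.trans hmℓ.le) ha hb hzfeas.1
  have heq : Set.EqOn z (proportional a b r t) (Set.Icc 1 ℓ) :=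
    eqOn_of_isMinOn_balancedSet_of_balance_pos (fun i hi => (ha i hi).ne')
      (fun i hi => (hb i hi).ne') hmin hz hpos
      (fun i hi => ⟨mul_pos (ha i hi) hr, mul_pos (hb i hi) ht⟩) hdur.le (hzbal ▸ hbal)
  have balance_m := hpos m (Finset.mem_Ico.2 ⟨hm1, hmℓ⟩)
  rw [balance_congr heq hmℓ.le, balance_proportional] at balance_m
  rw [balance_congr heq le_rfl, balance_proportional, ← sum_Icc_add_sum_Icc_succ a hmℓ.le,
    ← sum_Icc_add_sum_Icc_succ b hmℓ.le] at hzbal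
  refine div_lt_div_of_pos_of_add_eq_zero ?_ ?_ (by positivity) balance_m hzbal
  · exact Finset.sum_pos (fun i hi => ha i (Finset.Icc_subset_Icc_right hmℓ.le hi))
      (Finset.nonempty_Icc.2 hm1)
  · exact Finset.sum_pos (fun i hi => ha i (Finset.Icc_subset_Icc_left (by omega) hi))
      (Finset.nonempty_Icc.2 hmℓ)

section Parametrization

variable {N : ℝ} {c : ℕ → ℝ}

theorem cbar_of_mem_Ico (c : ℕ → ℝ) (hm : m ∈ Finset.Ico 1 ℓ) : cbar ℓ c m = c m := by
  rw [Finset.mem_Ico] at hm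
  exact if_neg (by omega)

theorem balance_eq_cbar (hz : memDtilde ℓ a b N c (fun i => (z i).1) fun i => (z i).2)
    (hm : m ≤ ℓ) : balance a b m z = cbar ℓ c m := by
  induction m with
  | zero => simp [cbar]
  | succ k ih =>
    have increment := (hz.2 (k + 1) (Finset.mem_Icc.2 ⟨by omega, hm⟩)).2.2.2
    rw [Nat.add_sub_cancel] at increment
    rw [balance_succ, ih (by omega), gain, ← increment]
    ring

theorem cbar_balance (hz : balance a b ℓ z = 0) (m : ℕ) :
    cbar ℓ (fun k => balance a b k z) m = balance a b m z := by
  rw [cbar]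
  split_ifs with h
  · obtain rfl | rfl := h
    · exact (balance_zero a b z).symm
    · exact hz.symm
  · rfl

theorem mem_balancedSet_of_memDtilde (hc : ∀ m ∈ Finset.Icc 1 (ℓ - 1), 0 ≤ c m)
    (hz : memDtilde ℓ a b N c (fun i => (z i).1) fun i => (z i).2) : z ∈ balancedSet ℓ a b := by
  refine mem_balancedSet.2 ⟨mem_feasibleSet.2 ⟨fun i hi => ?_, hz.1, fun m hm => ?_⟩, ?_⟩
  · exact ⟨(hz.2 i hi).1, (hz.2 i hi).2.1⟩
  · rw [Finset.mem_Icc] at hm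
    rw [balance_eq_cbar hz hm.2, cbar]
    split_ifs
    · exact le_rfl
    · exact hc m (Finset.mem_Icc.2 (by omega))
  · rw [balance_eq_cbar hz le_rfl, cbar, if_pos (Or.inr rfl)]

theorem memDtilde_balance (hN : 1 ≤ N) (hz : z ∈ balancedSet ℓ a b) :
    memDtilde ℓ a b N (fun m => balance a b m z) (fun i => (z i).1) fun i => (z i).2 := by
  obtain ⟨⟨hquad, hdur, -⟩, hzero⟩ := hz
  refine ⟨hdur, fun m hm => ⟨(hquad m hm).1, (hquad m hm).2, ?_, ?_⟩⟩
  · have single_le : (z m).1 + (z m).2 ≤ duration ℓ z :=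
      Finset.single_le_sum (f := fun i => (z i).1 + (z i).2)
        (fun i hi => (add_pos (hquad i hi).1 (hquad i hi).2).le) hm
    exact single_le.trans (hdur.trans hN)
  · obtain ⟨k, rfl⟩ := Nat.exists_eq_add_of_le' (Finset.mem_Icc.1 hm).1
    rw [cbar_balance hzero, cbar_balance hzero, Nat.add_sub_cancel, balance_succ, gain]
    ring

theorem memDc_balance (hN : 1 ≤ N) (hz : z ∈ balancedSet ℓ a b) :
    memDc ℓ a b N fun m => balance a b m z :=
  ⟨fun m hm => (mem_feasibleSet.1 hz.1).2.2 m
    (Finset.Icc_subset_Icc_right (Nat.sub_le ℓ 1) hm), _, _, memDtilde_balance hN hz⟩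

theorem duration_le_of_isArgminDm {x y : ℕ → ℝ}
    (hargmin : ∀ m ∈ Finset.Icc 1 ℓ,
      isArgminDm a b N m (cbar ℓ c (m - 1)) (cbar ℓ c m) (x m) (y m))
    (hz : memDtilde ℓ a b N c (fun i => (z i).1) fun i => (z i).2) :
    duration ℓ (fun i => (x i, y i)) ≤ duration ℓ z :=
  Finset.sum_le_sum fun i hi => (hargmin i hi).2 _ _ (hz.2 i hi)

theorem memDtilde_of_isArgminDm {x y : ℕ → ℝ} (hc : memDc ℓ a b N c)
    (hargmin : ∀ m ∈ Finset.Icc 1 ℓ,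
      isArgminDm a b N m (cbar ℓ c (m - 1)) (cbar ℓ c m) (x m) (y m)) :
    memDtilde ℓ a b N c x y := by
  obtain ⟨-, u, v, huv⟩ := hc
  exact ⟨(duration_le_of_isArgminDm (z := fun i => (u i, v i)) hargmin huv).trans huv.1,
    fun m hm => (hargmin m hm).1⟩

theorem isMinOn_balancedSet_of_isArgminDm (hN : 1 ≤ N) {xc yc : (ℕ → ℝ) → ℕ → ℝ}
    (hargmin : ∀ c : ℕ → ℝ, memDc ℓ a b N c → ∀ m ∈ Finset.Icc 1 ℓ,
      isArgminDm a b N m (cbar ℓ c (m - 1)) (cbar ℓ c m) (xc c m) (yc c m))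
    (hmin : ∀ c' : ℕ → ℝ, memDc ℓ a b N c' →
      ∑ m ∈ Finset.Icc 1 ℓ, (xc c m + yc c m) ≤ ∑ m ∈ Finset.Icc 1 ℓ, (xc c' m + yc c' m)) :
    IsMinOn (duration ℓ) (balancedSet ℓ a b) fun i => (xc c i, yc c i) :=
  isMinOn_iff.2 fun _ hw => (hmin _ (memDc_balance hN hw)).trans
    (duration_le_of_isArgminDm (hargmin _ (memDc_balance hN hw)) (memDtilde_balance hN hw))

end Parametrization

end Schedule

/-- If the late-expensive-obstacles assumption fails and `D̂` is nonempty, then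
there is `û ∈ {1,…,ℓ−1}` such that every minimizer of `Σ_m (x_m^c + y_m^c)` over `D^c`
satisfies `c_û = 0`. -/
theorem minimizer_vanishes_somewhere (ℓ : ℕ) (hℓ : 1 ≤ ℓ) (a b : ℕ → ℝ)
    (ha : ∀ i ∈ Finset.Icc 1 ℓ, 0 < a i) (hb : ∀ i ∈ Finset.Icc 1 ℓ, 0 < b i)
    (N : ℝ) (hN : 1 < N)
    (hfail : ∃ m : ℕ, 1 ≤ m ∧ m < ℓ ∧
      (∑ i ∈ Finset.Icc (m + 1) ℓ, b i) / (∑ i ∈ Finset.Icc (m + 1) ℓ, a i) ≤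
        (∑ i ∈ Finset.Icc 1 m, b i) / (∑ i ∈ Finset.Icc 1 m, a i))
    (hDhat : ∃ x y : ℕ → ℝ, memDhat ℓ a b x y)
    (xc yc : (ℕ → ℝ) → ℕ → ℝ)
    (hxcyc : ∀ c : ℕ → ℝ, memDc ℓ a b N c → ∀ m ∈ Finset.Icc 1 ℓ,
      isArgminDm a b N m (cbar ℓ c (m - 1)) (cbar ℓ c m) (xc c m) (yc c m)) :
    ∃ u : ℕ, 1 ≤ u ∧ u < ℓ ∧
      ∀ c : ℕ → ℝ, memDc ℓ a b N c →
        (∀ c' : ℕ → ℝ, memDc ℓ a b N c' →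
          (∑ m ∈ Finset.Icc 1 ℓ, (xc c m + yc c m)) ≤
            ∑ m ∈ Finset.Icc 1 ℓ, (xc c' m + yc c' m)) →
        c u = 0 := by
  obtain ⟨m, hm1, hmℓ, hle⟩ := hfail
  let z (c : ℕ → ℝ) (i : ℕ) : ℝ × ℝ := (xc c i, yc c i)
  have hz_tilde (c) (hc : memDc ℓ a b N c) : memDtilde ℓ a b N c (xc c) (yc c) :=
    memDtilde_of_isArgminDm hc (hxcyc c hc)
  have hz_mem (c) (hc : memDc ℓ a b N c) : z c ∈ balancedSet ℓ a b :=
    mem_balancedSet_of_memDtilde hc.1 (hz_tilde c hc)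
  have hz_balance (c) (hc : memDc ℓ a b N c) (k) (hk : k ∈ Finset.Ico 1 ℓ) :
      balance a b k (z c) = c k :=
    (balance_eq_cbar (hz_tilde c hc) (Finset.mem_Ico.1 hk).2.le).trans (cbar_of_mem_Ico c hk)
  by_contra! hnone
  obtain ⟨c, hc, hmin, -⟩ := hnone m hm1 hmℓ
  have hz_min := isMinOn_balancedSet_of_isArgminDm hN.le hxcyc hmin
  have hc_pos : ∀ k ∈ Finset.Ico 1 ℓ, 0 < balance a b k (z c) := by
    intro k hk
    obtain ⟨hk1, hkℓ⟩ := Finset.mem_Ico.1 hk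
    obtain ⟨d, hd, hdmin, hdk⟩ := hnone k hk1 hkℓ
    have heq : Set.EqOn (z c) (z d) (Set.Icc 1 ℓ) :=
      eqOn_of_isMinOn_balancedSet (fun i hi => (ha i hi).ne') (fun i hi => (hb i hi).ne')
        hz_min (hz_mem c hc).1 (hz_mem d hd).1 (hdmin c hc)
    rw [balance_congr heq hkℓ.le, hz_balance d hd k hk]
    exact (hd.1 k (Finset.mem_Icc.2 (by omega))).lt_of_ne' hdk
  exact (lateExpensive_of_isMinOn_balancedSet ha hb hz_min (hz_mem c hc) hc_pos m hm1 hmℓ).not_ge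
    hle
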